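/- Let h : [0, ∞) → ℝ be a smooth function with h(0) = 0, h'(0) = 1 and h(t) > 0 for all t > 0, and suppose h satisfies the ODE h(t)² h'''(t) + h'(t)(2 + h(t) h''(t)) − 2 h'(t)³ = 0 for all t > 0. Then the radial curvature function K(t) = − h''(t)/h(t) is constant on (0, ∞); that is, for all s, t > 0 one has h''(s)/h(s) = h''(t)/h(t). -/

import Mathlib

/-!
A model has two sectional curvatures, the radial `K = -h''/h` and the tangential
`L = (1 - h'²)/h²`. Multiplied by `-h`, the left-hand side of the ODE is the derivative of the
defect `h⁴ (K - L) = h² (h'² - 1 - h h'')`, so the defect is a first integral; it vanishes at the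
pole because `h` does. Hence `K = L`, and constancy follows as in Schur's lemma from the
Bianchi identity `L' = 2 (h'/h) (K - L)`.
-/

section

open Set Filter Topology

theorem eq_of_hasDerivAt_zero {E : Type*} [NormedAddCommGroup E] [NormedSpace ℝ E] {f : ℝ → E}
    {U : Set ℝ} (hU : IsOpen U) (hU' : IsPreconnected U) (hf : ∀ x ∈ U, HasDerivAt f 0 x)
    {x y : ℝ} (hx : x ∈ U) (hy : y ∈ U) : f x = f y :=
  hU.is_const_of_deriv_eq_zero hU'
    (fun z hz => (hf z hz).differentiableAt.differentiableWithinAt)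
    (fun z hz => (hf z hz).deriv) hx hy

/-- The left-hand side of the ODE characterizing the warping functions of the 4-dimensional models
for which rotationally symmetric conformal diffeomorphisms are biharmonic. -/
noncomputable def biharmonicOperator (h : ℝ → ℝ) (t : ℝ) : ℝ :=
  (h t) ^ 2 * deriv (deriv (deriv h)) t
    + deriv h t * (2 + h t * deriv (deriv h) t) - 2 * (deriv h t) ^ 3

/-- The sectional curvature of the planes containing the radial direction, in the model with
warping function `h`. -/
noncomputable def radialCurvature (h : ℝ → ℝ) (t : ℝ) : ℝ :=
  -(deriv (deriv h) t / h t)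

/-- The sectional curvature of the planes tangent to the geodesic spheres, in the model with
warping function `h`. -/
noncomputable def tangentialCurvature (h : ℝ → ℝ) (t : ℝ) : ℝ :=
  (1 - deriv h t ^ 2) / h t ^ 2

/-- The difference of the radial and tangential curvatures scaled by `h ^ 4`, written without
division so that it extends continuously by zero to the pole. -/
noncomputable def curvatureDefect (h : ℝ → ℝ) (t : ℝ) : ℝ :=
  h t ^ 2 * (deriv h t ^ 2 - 1 - h t * deriv (deriv h) t)

variable {h : ℝ → ℝ} {a b s t : ℝ}

theorem curvatureDefect_eq_mul_sub (ht : h t ≠ 0) :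
    curvatureDefect h t = h t ^ 4 * (radialCurvature h t - tangentialCurvature h t) := by
  unfold curvatureDefect radialCurvature tangentialCurvature
  field_simp
  ring

theorem hasDerivAt_tangentialCurvature (hh : DifferentiableAt ℝ h t)
    (hh' : DifferentiableAt ℝ (deriv h) t) (ht : h t ≠ 0) :
    HasDerivAt (tangentialCurvature h)
      (2 * (deriv h t / h t) * (radialCurvature h t - tangentialCurvature h t)) t := by
  have hL := ((hh'.hasDerivAt.pow 2).const_sub 1).div (hh.hasDerivAt.pow 2) (pow_ne_zero 2 ht)
  refine hL.congr_deriv ?_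
  simp only [radialCurvature, tangentialCurvature, Pi.pow_apply]
  field_simp
  ring

theorem hasDerivAt_curvatureDefect (hh : DifferentiableAt ℝ h t)
    (hh' : DifferentiableAt ℝ (deriv h) t) (hh'' : DifferentiableAt ℝ (deriv (deriv h)) t) :
    HasDerivAt (curvatureDefect h) (-h t * biharmonicOperator h t) t := by
  have hD := (hh.hasDerivAt.pow 2).mul
    (((hh'.hasDerivAt.pow 2).sub_const 1).sub (hh.hasDerivAt.mul hh''.hasDerivAt))
  refine hD.congr_deriv ?_
  simp only [biharmonicOperator, Pi.pow_apply, Pi.mul_apply, Pi.sub_apply]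
  ring

theorem tendsto_curvatureDefect_nhdsGT (hab : a < b) (hh : ContDiffOn ℝ 2 h (Ico a b))
    (ha : h a = 0) : Tendsto (curvatureDefect h) (𝓝[>] a) (𝓝 0) := by
  set h' := derivWithin h (Ico a b)
  set h'' := derivWithin h' (Ico a b)
  have hh' : ContDiffOn ℝ 1 h' (Ico a b) := hh.derivWithin (uniqueDiffOn_Ico a b) (by norm_num)
  have hh'' : ContinuousOn h'' (Ico a b) :=
    hh'.continuousOn_derivWithin (uniqueDiffOn_Ico a b) le_rfl
  have h'_eq : EqOn h' (deriv h) (Ioo a b) := fun x hx =>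
    derivWithin_of_mem_nhds (Ico_mem_nhds hx.1 hx.2)
  have h''_eq : EqOn h'' (deriv (deriv h)) (Ioo a b) := fun x hx =>
    (derivWithin_of_mem_nhds (Ico_mem_nhds hx.1 hx.2)).trans (h'_eq.deriv isOpen_Ioo hx)
  have hcont : ContinuousOn (fun x => h x ^ 2 * (h' x ^ 2 - 1 - h x * h'' x)) (Ico a b) :=
    (hh.continuousOn.pow 2).mul
      (((hh'.continuousOn.pow 2).sub continuousOn_const).sub (hh.continuousOn.mul hh''))
  have hlim := (hcont a (left_mem_Ico.2 hab)).mono Ioo_subset_Ico_self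
  rw [ContinuousWithinAt, nhdsWithin_Ioo_eq_nhdsGT hab, ha, zero_pow two_ne_zero, zero_mul] at hlim
  refine hlim.congr' ?_
  filter_upwards [Ioo_mem_nhdsGT hab] with x hx
  rw [curvatureDefect, h'_eq hx, h''_eq hx]

theorem curvatureDefect_eq_zero (hh : ContDiffOn ℝ 3 h (Ico a b)) (ha : h a = 0)
    (hode : ∀ x ∈ Ioo a b, biharmonicOperator h x = 0) (ht : t ∈ Ioo a b) :
    curvatureDefect h t = 0 := by
  have hab : a < b := ht.1.trans ht.2
  have hderiv : ∀ x ∈ Ioo a b, HasDerivAt (curvatureDefect h) 0 x := fun x hx => by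
    have hh₀ : ContDiffAt ℝ 3 h x := hh.contDiffAt (Ico_mem_nhds hx.1 hx.2)
    have hh₁ : ContDiffAt ℝ 2 (deriv h) x := hh₀.derivWithin (by norm_num)
    have hh₂ : ContDiffAt ℝ 1 (deriv (deriv h)) x := hh₁.derivWithin (by norm_num)
    simpa only [hode x hx, mul_zero] using
      hasDerivAt_curvatureDefect (hh₀.differentiableAt (by norm_num))
        (hh₁.differentiableAt (by norm_num)) (hh₂.differentiableAt one_ne_zero)
  have hconst : Tendsto (curvatureDefect h) (𝓝[>] a) (𝓝 (curvatureDefect h t)) := by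
    refine tendsto_const_nhds.congr' ?_
    filter_upwards [Ioo_mem_nhdsGT hab] with x hx
    exact eq_of_hasDerivAt_zero isOpen_Ioo isPreconnected_Ioo hderiv ht hx
  exact tendsto_nhds_unique hconst
    (tendsto_curvatureDefect_nhdsGT hab (hh.of_le (by norm_num)) ha)

theorem radialCurvature_eq_tangentialCurvature (hh : ContDiffOn ℝ 3 h (Ico a b)) (ha : h a = 0)
    (hode : ∀ x ∈ Ioo a b, biharmonicOperator h x = 0) (ht : t ∈ Ioo a b) (hne : h t ≠ 0) :
    radialCurvature h t = tangentialCurvature h t := by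
  have hdefect := curvatureDefect_eq_zero hh ha hode ht
  rw [curvatureDefect_eq_mul_sub hne] at hdefect
  exact sub_eq_zero.1 ((mul_eq_zero.1 hdefect).resolve_left (pow_ne_zero 4 hne))

theorem statement5_general (hh : ContDiffOn ℝ 3 h (Ico a b)) (ha : h a = 0)
    (hne : ∀ x ∈ Ioo a b, h x ≠ 0) (hode : ∀ x ∈ Ioo a b, biharmonicOperator h x = 0)
    (hs : s ∈ Ioo a b) (ht : t ∈ Ioo a b) :
    radialCurvature h s = radialCurvature h t := by
  have hiso : ∀ x ∈ Ioo a b, radialCurvature h x = tangentialCurvature h x := fun x hx =>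
    radialCurvature_eq_tangentialCurvature hh ha hode hx (hne x hx)
  have hderiv : ∀ x ∈ Ioo a b, HasDerivAt (tangentialCurvature h) 0 x := fun x hx => by
    have hh₀ : ContDiffAt ℝ 3 h x := hh.contDiffAt (Ico_mem_nhds hx.1 hx.2)
    have hh₁ : ContDiffAt ℝ 2 (deriv h) x := hh₀.derivWithin (by norm_num)
    simpa only [hiso x hx, sub_self, mul_zero] using
      hasDerivAt_tangentialCurvature (hh₀.differentiableAt (by norm_num))
        (hh₁.differentiableAt (by norm_num)) (hne x hx)
  rw [hiso s hs, hiso t ht]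
  exact eq_of_hasDerivAt_zero isOpen_Ioo isPreconnected_Ioo hderiv hs ht

end

/-- If `h : [0,∞) → ℝ` is smooth with `h(0) = 0`, `h'(0) = 1`, `h > 0` on `(0,∞)` and
satisfies `h² h''' + h'(2 + h h'') − 2 h'³ = 0` on `(0,∞)`, then the radial curvature
`K = −h''/h` is constant on `(0,∞)`. -/
theorem statement5
    (h : ℝ → ℝ) (hsm : ContDiffOn ℝ (⊤ : ℕ∞) h (Set.Ici 0))
    (h0 : h 0 = 0) (h1 : derivWithin h (Set.Ici 0) 0 = 1)
    (hpos : ∀ t > (0:ℝ), 0 < h t)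
    (hode : ∀ t > (0:ℝ),
      (h t)^2 * deriv (deriv (deriv h)) t
        + deriv h t * (2 + h t * deriv (deriv h) t) - 2 * (deriv h t)^3 = 0) :
    ∀ s > (0:ℝ), ∀ t > (0:ℝ),
      deriv (deriv h) s / h s = deriv (deriv h) t / h t := by
  intro s hs t ht
  have hC3 : ContDiffOn ℝ 3 h (Set.Ico 0 (max s t + 1)) :=
    (contDiffOn_infty.1 hsm 3).mono Set.Ico_subset_Ici_self
  exact neg_inj.1 <| statement5_general hC3 h0 (fun x hx => (hpos x hx.1).ne')
    (fun x hx => hode x hx.1) ⟨hs, lt_add_of_le_of_pos (le_max_left s t) one_pos⟩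
    ⟨ht, lt_add_of_le_of_pos (le_max_right s t) one_pos⟩
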